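/- Let d ≥ 1, T ≥ 1, and 0 < δ ≤ 1/4. For each α ∈ {−1,+1}^d let Q_α be the probability mass function on {1,…,d} × {0,1} given by Q_α(i, b) = (1/d)·(1/2 + α_i δ) if b = 1 and Q_α(i, b) = (1/d)·(1/2 − α_i δ) if b = 0. Then for all α, β ∈ {−1,+1}^d, the Kullback–Leibler divergence between the T-fold product distributions satisfies KL(Q_α^{⊗T} || Q_β^{⊗T}) ≤ 16 T δ². -/

import Mathlib

/-!
The logarithm of a ratio of products is a sum over the `T` queries, and in each summand the other
`T - 1` coordinates integrate to `1`; hence the divergence of the products is `T` times the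
divergence of a single query (`sum_prod_mul_log_prod_div_prod`).

For a single query the factor `1 / d` cancels inside the logarithm, so the divergence is the average
over `i` of the divergence of two Bernoulli laws. The `i`-th term is `0` if `α i = β i`, and else
`2 δ log ((1/2 + δ) / (1/2 - δ))`, which `log x ≤ x - 1` bounds by `4 δ² / (1/2 - δ) ≤ 16 δ²`
(`bernoulli_kl_le`). Bounding the two logarithms separately, that is, passing through the
χ²-divergence, would give `4 δ² / (1/4 - δ²)`, which exceeds `16 δ²`.
-/

/-- The probability mass function on `{1,…,d} × {0,1}` of the pair revealed by one
oracle query for the parameter `α`: a coordinate `i` chosen uniformly, then a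
Bernoulli bit with parameter `1/2 + α_i δ`. -/
noncomputable def oracleQueryPMF (d : ℕ) (δ : ℝ) (α : Fin d → ℤ) : Fin d × Bool → ℝ :=
  fun p => (1 / (d : ℝ)) * (if p.2 then 1 / 2 + (α p.1 : ℝ) * δ else 1 / 2 - (α p.1 : ℝ) * δ)

/-- Under a product of weights of total mass `1`, a function of the single coordinate `t` has
the same expectation as under one factor. -/
lemma sum_prod_mul_apply {Ω : Type*} [Fintype Ω] {T : ℕ} (p f : Ω → ℝ)
    (hp : ∑ x, p x = 1) (t : Fin T) :
    ∑ ω : Fin T → Ω, (∏ s, p (ω s)) * f (ω t) = ∑ x, p x * f x := by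
  classical
  -- Absorbing `f` into the factor at `t` turns the summand into a product over coordinates.
  have h1 : ∀ ω : Fin T → Ω, (∏ s, p (ω s)) * f (ω t) =
      ∏ s, p (ω s) * (if s = t then f (ω s) else 1) := by
    intro ω
    rw [Finset.prod_mul_distrib]
    simp
  have h2 : ∀ s : Fin T, ∑ x, p x * (if s = t then f x else 1) =
      if s = t then ∑ x, p x * f x else 1 := by
    intro s
    split_ifs <;> simp [hp]
  simp_rw [h1]
  rw [← Fintype.prod_sum (fun s x => p x * (if s = t then f x else 1))]
  simp_rw [h2]
  simp

/-- Tensorization of the Kullback–Leibler divergence for strictly positive weights on a finite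
type; the reference weights `q` need not be normalized. -/
lemma sum_prod_mul_log_prod_div_prod {Ω : Type*} [Fintype Ω] (T : ℕ) (p q : Ω → ℝ)
    (hp : ∑ x, p x = 1) (hp0 : ∀ x, 0 < p x) (hq0 : ∀ x, 0 < q x) :
    ∑ ω : Fin T → Ω, (∏ t, p (ω t)) * Real.log ((∏ t, p (ω t)) / ∏ t, q (ω t)) =
      T * ∑ x, p x * Real.log (p x / q x) := by
  have h1 : ∀ ω : Fin T → Ω, Real.log ((∏ t, p (ω t)) / ∏ t, q (ω t)) =
      ∑ t, Real.log (p (ω t) / q (ω t)) := by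
    intro ω
    rw [← Finset.prod_div_distrib, Real.log_prod]
    exact fun t _ => (div_pos (hp0 _) (hq0 _)).ne'
  simp_rw [h1, Finset.mul_sum]
  rw [Finset.sum_comm]
  simp_rw [sum_prod_mul_apply p (fun x => Real.log (p x / q x)) hp]
  simp [Finset.mul_sum]

/-- The divergence between the Bernoulli laws with parameters `1/2 + a δ` and `1/2 + b δ`,
for signs `a` and `b`, is at most `16 δ²`. -/
lemma bernoulli_kl_le {δ : ℝ} (hδ_pos : 0 < δ) (hδ_le : δ ≤ 1 / 4) {a b : ℤ}
    (ha : a = 1 ∨ a = -1) (hb : b = 1 ∨ b = -1) :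
    (1 / 2 + a * δ) * Real.log ((1 / 2 + a * δ) / (1 / 2 + b * δ)) +
      (1 / 2 - a * δ) * Real.log ((1 / 2 - a * δ) / (1 / 2 - b * δ)) ≤ 16 * δ ^ 2 := by
  have hu : 0 < 1 / 2 + δ := by linarith
  have hv : 0 < 1 / 2 - δ := by linarith
  have key : 2 * δ * Real.log ((1 / 2 + δ) / (1 / 2 - δ)) ≤ 16 * δ ^ 2 := by
    have h1 : Real.log ((1 / 2 + δ) / (1 / 2 - δ)) ≤ 8 * δ := by
      refine (Real.log_le_sub_one_of_pos (div_pos hu hv)).trans ?_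
      rw [sub_le_iff_le_add, div_le_iff₀ hv]
      nlinarith
    nlinarith
  rw [Real.log_div hu.ne' hv.ne'] at key
  have h0 : 0 ≤ 16 * δ ^ 2 := by positivity
  rcases ha with rfl | rfl <;> rcases hb with rfl | rfl <;>
    simp only [Int.cast_one, Int.cast_neg, one_mul, neg_mul, sub_neg_eq_add, ← sub_eq_add_neg,
      Real.log_div hu.ne' hu.ne', Real.log_div hv.ne' hv.ne', Real.log_div hu.ne' hv.ne',
      Real.log_div hv.ne' hu.ne'] <;>
    linarith

lemma oracleQueryPMF_pos {d : ℕ} (hd : 1 ≤ d) {δ : ℝ} (hδ_pos : 0 < δ) (hδ_le : δ ≤ 1 / 4)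
    {α : Fin d → ℤ} (hα : ∀ i, α i = 1 ∨ α i = -1) (x : Fin d × Bool) :
    0 < oracleQueryPMF d δ α x := by
  have hd' : (0 : ℝ) < d := by exact_mod_cast hd
  unfold oracleQueryPMF
  refine mul_pos (by positivity) ?_
  rcases hα x.1 with h | h <;> rw [h] <;> split_ifs <;> push_cast <;> linarith

lemma oracleQueryPMF_sum {d : ℕ} (hd : 1 ≤ d) (δ : ℝ) (α : Fin d → ℤ) :
    ∑ x, oracleQueryPMF d δ α x = 1 := by
  have hd' : (d : ℝ) ≠ 0 := by positivity
  have h : ∀ i, ∑ b, oracleQueryPMF d δ α (i, b) = 1 / d := by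
    intro i
    simp only [oracleQueryPMF, Fintype.sum_bool, if_true, Bool.false_eq_true, if_false]
    ring
  rw [Fintype.sum_prod_type]
  simp_rw [h]
  simp [hd']

lemma oracleQueryPMF_kl_le {d : ℕ} (hd : 1 ≤ d) {δ : ℝ} (hδ_pos : 0 < δ) (hδ_le : δ ≤ 1 / 4)
    {α β : Fin d → ℤ} (hα : ∀ i, α i = 1 ∨ α i = -1) (hβ : ∀ i, β i = 1 ∨ β i = -1) :
    ∑ x, oracleQueryPMF d δ α x * Real.log (oracleQueryPMF d δ α x / oracleQueryPMF d δ β x) ≤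
      16 * δ ^ 2 := by
  have hd' : (d : ℝ) ≠ 0 := by positivity
  have h : ∀ i, ∑ b, oracleQueryPMF d δ α (i, b) *
      Real.log (oracleQueryPMF d δ α (i, b) / oracleQueryPMF d δ β (i, b)) ≤
        1 / d * (16 * δ ^ 2) := by
    intro i
    simp only [oracleQueryPMF, Fintype.sum_bool, if_true, Bool.false_eq_true, if_false,
      mul_div_mul_left _ _ (one_div_ne_zero hd'), mul_assoc, ← mul_add]
    exact mul_le_mul_of_nonneg_left (bernoulli_kl_le hδ_pos hδ_le (hα i) (hβ i)) (by positivity)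
  rw [Fintype.sum_prod_type]
  refine (Finset.sum_le_sum fun i _ => h i).trans_eq ?_
  simp [hd']

/-- KL divergence bound between the `T`-fold products of the oracle distributions
for two sign-vector parameters: `KL(Q_α^{⊗T} ‖ Q_β^{⊗T}) ≤ 16 T δ²`. -/
theorem oracle_product_kl_le (d T : ℕ) (hd : 1 ≤ d) (hT : 1 ≤ T)
    (δ : ℝ) (hδ_pos : 0 < δ) (hδ_le : δ ≤ 1 / 4)
    (α β : Fin d → ℤ)
    (hα : ∀ i, α i = 1 ∨ α i = -1) (hβ : ∀ i, β i = 1 ∨ β i = -1) :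
    ∑ ω : Fin T → Fin d × Bool,
        (∏ t : Fin T, oracleQueryPMF d δ α (ω t)) *
          Real.log ((∏ t : Fin T, oracleQueryPMF d δ α (ω t)) /
            (∏ t : Fin T, oracleQueryPMF d δ β (ω t))) ≤
      16 * T * δ ^ 2 := by
  rw [sum_prod_mul_log_prod_div_prod T _ _ (oracleQueryPMF_sum hd δ α)
    (oracleQueryPMF_pos hd hδ_pos hδ_le hα) (oracleQueryPMF_pos hd hδ_pos hδ_le hβ)]
  calc _ ≤ (T : ℝ) * (16 * δ ^ 2) :=
        mul_le_mul_of_nonneg_left (oracleQueryPMF_kl_le hd hδ_pos hδ_le hα hβ) (Nat.cast_nonneg T)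
    _ = 16 * T * δ ^ 2 := by ring
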